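/- There exists an index k with 0 ≤ k ≤ n − 1 such that at least one of the four vectors v₁⁽ᵏ⁾, v₂⁽ᵏ⁾, v₁⁽ᵏ⁾ + v₂⁽ᵏ⁾, v₁⁽ᵏ⁾ − v₂⁽ᵏ⁾ is a shortest vector of Λ(a, m). -/

import Mathlib

/-!
Up to swapping rows according to the parity of `k`, the state `X k` has rows `u = (s, -R)` and
`w = (Q, r)` (or their mirror images), where `R, r` are consecutive remainders of the Euclidean
algorithm on `(m, a)` and `s, Q` are consecutive convergent denominators. The rows generate
`Λ(a, m)`.

Take the first `k` with `r ≤ Q`. The previous state gives `s < R`, so all of `s ≤ R`, `r ≤ Q`,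
`s ≤ Q`, `r ≤ R` hold. Under these inequalities every nonzero combination `i u + j w` is at least
as long as one of `u`, `w`, `u + w`, `u - w` (`le_combo`): multiples of these four are clear, and if
`i, j` are nonzero with `|i| ≠ |j|`, then the vector is at least as long as `u` or `w`.
Such a `k` occurs before `n`: as `a` and `m` are coprime, a state `n - 1` with `Q < r` would have
`r = 1`, while `Q ≥ 1`.
-/

/-- The value of the continued fraction `[0; q₁, …, qₙ]` where the list is `[q₁, …, qₙ]`. -/
def cfVal : List ℤ → ℚ
  | [] => 0
  | c :: rest => ((c : ℚ) + cfVal rest)⁻¹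

/-- `v` is a shortest vector of the lattice `Λ(a, m) = {(x, y) ∈ ℤ² : m ∣ a·x + y}`:
it is a nonzero lattice vector whose Euclidean norm (equivalently, squared norm)
is minimal among all nonzero lattice vectors. -/
def IsShortestVec (a m : ℤ) (v : ℤ × ℤ) : Prop :=
  (m ∣ a * v.1 + v.2) ∧ v ≠ 0 ∧
    ∀ w : ℤ × ℤ, (m ∣ a * w.1 + w.2) → w ≠ 0 →
      v.1 ^ 2 + v.2 ^ 2 ≤ w.1 ^ 2 + w.2 ^ 2

/-- Combinations with positive coefficients. If `R ≤ Q`, the first coordinate `i s + j Q` alone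
makes the vector at least as long as `u`; otherwise it is at least as long as `w` or is a multiple
of `u + w`. -/
lemma le_combo_pos {s R Q r M i j : ℤ} (hs : 0 ≤ s) (hr : 0 ≤ r)
    (hrQ : r ≤ Q) (hrR : r ≤ R)
    (h1 : M ≤ s ^ 2 + R ^ 2) (h2 : M ≤ Q ^ 2 + r ^ 2)
    (h3 : M ≤ (Q + s) ^ 2 + (R - r) ^ 2) (hi : 1 ≤ i) (hj : 1 ≤ j) :
    M ≤ (i * s + j * Q) ^ 2 + (j * r - i * R) ^ 2 := by
  have hQ : 0 ≤ Q := hr.trans hrQ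
  have hR : 0 ≤ R := hr.trans hrR
  have his : s ≤ i * s := by nlinarith
  have hjQ : Q ≤ j * Q := by nlinarith
  have hx : (s + Q) ^ 2 ≤ (i * s + j * Q) ^ 2 := pow_le_pow_left₀ (by omega) (by omega) 2
  have hy := sq_nonneg (j * r - i * R)
  rcases le_total R Q with h | h
  · nlinarith
  rcases lt_trichotomy i j with hij | hij | hij
  · have h4 : 2 * Q ≤ j * Q := by nlinarith
    have h5 : (2 * Q) ^ 2 ≤ (i * s + j * Q) ^ 2 := pow_le_pow_left₀ (by omega) (by omega) 2
    nlinarith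
  · subst hij
    have h4 : (i * s + i * Q) ^ 2 + (i * r - i * R) ^ 2
        = i ^ 2 * ((Q + s) ^ 2 + (R - r) ^ 2) := by ring
    have h5 : 1 ≤ i ^ 2 := by nlinarith
    have h6 : 0 ≤ (Q + s) ^ 2 + (R - r) ^ 2 := by positivity
    rw [h4]; nlinarith
  · have h4 : R ≤ i * R - j * r := by nlinarith
    have h5 : R ^ 2 ≤ (i * R - j * r) ^ 2 := pow_le_pow_left₀ hR h4 2
    nlinarith

/-- A lower bound `M` for the squared lengths of `u = (s, -R)`, `w = (Q, r)` and `u ± w` is a lower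
bound for the squared lengths of all their nonzero integer combinations. -/
lemma le_combo {s R Q r M i j : ℤ} (hs : 0 ≤ s) (hr : 0 ≤ r)
    (hsR : s ≤ R) (hrQ : r ≤ Q) (hsQ : s ≤ Q) (hrR : r ≤ R)
    (h1 : M ≤ s ^ 2 + R ^ 2) (h2 : M ≤ Q ^ 2 + r ^ 2)
    (h3 : M ≤ (Q + s) ^ 2 + (R - r) ^ 2) (h4 : M ≤ (Q - s) ^ 2 + (R + r) ^ 2)
    (hij : i ≠ 0 ∨ j ≠ 0) :
    M ≤ (i * s + j * Q) ^ 2 + (j * r - i * R) ^ 2 := by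
  have hpos := fun i j => le_combo_pos (i := i) (j := j) hs hr hrQ hrR h1 h2 h3
  -- Exchanging the coordinates turns coefficients of opposite sign into coefficients of equal sign.
  have hneg := fun i j => le_combo_pos (i := i) (j := j) (s := r) (R := Q) (Q := R) (r := s) (M := M)
    hr hs hsR hsQ (by linarith) (by linarith) (by linarith)
  rcases lt_trichotomy i 0 with hi | rfl | hi <;> rcases lt_trichotomy j 0 with hj | rfl | hj
  · linarith [hpos (-i) (-j) (by omega) (by omega)]
  · have : 1 ≤ i ^ 2 := by nlinarith
    nlinarith [sq_nonneg s, sq_nonneg R]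
  · linarith [hneg j (-i) (by omega) (by omega)]
  · have : 1 ≤ j ^ 2 := by nlinarith
    nlinarith [sq_nonneg Q, sq_nonneg r]
  · simp at hij
  · have : 1 ≤ j ^ 2 := by nlinarith
    nlinarith [sq_nonneg Q, sq_nonneg r]
  · linarith [hneg (-j) i (by omega) (by omega)]
  · have : 1 ≤ i ^ 2 := by nlinarith
    nlinarith [sq_nonneg s, sq_nonneg R]
  · exact hpos i j (by omega) (by omega)

/-- The rows `(p, -x)`, `(t, y)` of a matrix generate `Λ(a, m)`. -/
def Spans (a m p x t y : ℤ) : Prop :=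
  m ∣ a * p - x ∧ m ∣ a * t + y ∧
    ∀ w : ℤ × ℤ, m ∣ a * w.1 + w.2 → ∃ i j : ℤ, w = (i * p + j * t, -(i * x) + j * y)

/-- The conclusion of the theorem for a generating matrix with rows `(p, -x)`, `(t, y)` whose
entries satisfy, up to exchanging the roles of the rows, the inequalities of `le_combo`. -/
lemma shortest_of_spans {a m p x t y : ℤ} (h : Spans a m p x t y)
    (hp : 0 ≤ p) (hx : 0 ≤ x) (ht : 0 ≤ t) (hy : 0 ≤ y) (hdet : 0 < p * y + x * t)
    (hc : (p ≤ x ∧ y ≤ t ∧ p ≤ t ∧ y ≤ x) ∨ (t ≤ y ∧ x ≤ p ∧ t ≤ p ∧ x ≤ y)) :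
    IsShortestVec a m (p, -x) ∨ IsShortestVec a m (t, y) ∨
      IsShortestVec a m (p + t, -x + y) ∨ IsShortestVec a m (p - t, -x - y) := by
  obtain ⟨hd1, hd2, hspan⟩ := h
  have key : ∀ M : ℤ, M ≤ p ^ 2 + x ^ 2 → M ≤ t ^ 2 + y ^ 2 → M ≤ (p + t) ^ 2 + (x - y) ^ 2 →
      M ≤ (p - t) ^ 2 + (x + y) ^ 2 → ∀ w : ℤ × ℤ, m ∣ a * w.1 + w.2 → w ≠ 0 →
      M ≤ w.1 ^ 2 + w.2 ^ 2 := by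
    intro M h1 h2 h3 h4 w hw hw0
    obtain ⟨i, j, rfl⟩ := hspan w hw
    have hij : i ≠ 0 ∨ j ≠ 0 := by
      by_contra! hcon
      obtain ⟨rfl, rfl⟩ := hcon
      simp at hw0
    rcases hc with ⟨c1, c2, c3, c4⟩ | ⟨c1, c2, c3, c4⟩
    · have := le_combo (M := M) hp hy c1 c2 c3 c4 (by linarith) (by linarith) (by linarith)
        (by linarith) hij
      simp only
      linarith
    · have := le_combo (M := M) ht hx c1 c2 c3 c4 (by linarith) (by linarith) (by linarith)
        (by linarith) hij.symm
      simp only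
      linarith
  have n1 : ((p, -x) : ℤ × ℤ) ≠ 0 := by
    intro h'
    simp only [Prod.mk_eq_zero, neg_eq_zero] at h'
    rw [h'.1, h'.2] at hdet; simp at hdet
  have n2 : ((t, y) : ℤ × ℤ) ≠ 0 := by
    intro h'
    simp only [Prod.mk_eq_zero] at h'
    rw [h'.1, h'.2] at hdet; simp at hdet
  have n3 : ((p + t, -x + y) : ℤ × ℤ) ≠ 0 := by
    intro h'
    simp only [Prod.mk_eq_zero] at h'
    have hp0 : p = 0 := by omega
    have ht0 : t = 0 := by omega
    rw [hp0, ht0] at hdet; simp at hdet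
  have n4 : ((p - t, -x - y) : ℤ × ℤ) ≠ 0 := by
    intro h'
    simp only [Prod.mk_eq_zero] at h'
    have hx0 : x = 0 := by omega
    have hy0 : y = 0 := by omega
    rw [hx0, hy0] at hdet; simp at hdet
  have d3 : m ∣ a * (p + t) + (-x + y) := by
    rw [show a * (p + t) + (-x + y) = (a * p - x) + (a * t + y) by ring]
    exact dvd_add hd1 hd2
  have d4 : m ∣ a * (p - t) + (-x - y) := by
    rw [show a * (p - t) + (-x - y) = (a * p - x) - (a * t + y) by ring]
    exact dvd_sub hd1 hd2
  have d1 : m ∣ a * p + -x := by rwa [← sub_eq_add_neg]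
  -- The shortest of the four candidates is a shortest vector.
  by_cases b1 : p ^ 2 + x ^ 2 ≤ t ^ 2 + y ^ 2 ∧ p ^ 2 + x ^ 2 ≤ (p + t) ^ 2 + (x - y) ^ 2 ∧
      p ^ 2 + x ^ 2 ≤ (p - t) ^ 2 + (x + y) ^ 2
  · refine Or.inl ⟨d1, n1, fun w hw hw0 => ?_⟩
    rw [neg_sq]
    exact key _ le_rfl b1.1 b1.2.1 b1.2.2 w hw hw0
  by_cases b2 : t ^ 2 + y ^ 2 ≤ p ^ 2 + x ^ 2 ∧ t ^ 2 + y ^ 2 ≤ (p + t) ^ 2 + (x - y) ^ 2 ∧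
      t ^ 2 + y ^ 2 ≤ (p - t) ^ 2 + (x + y) ^ 2
  · exact Or.inr (Or.inl ⟨hd2, n2, key _ b2.1 le_rfl b2.2.1 b2.2.2⟩)
  by_cases b3 : (p + t) ^ 2 + (x - y) ^ 2 ≤ (p - t) ^ 2 + (x + y) ^ 2
  · refine Or.inr (Or.inr (Or.inl ⟨d3, n3, fun w hw hw0 => ?_⟩))
    have := key ((p + t) ^ 2 + (x - y) ^ 2) (by omega) (by omega) le_rfl b3 w hw hw0
    simp only
    linarith
  · refine Or.inr (Or.inr (Or.inr ⟨d4, n4, fun w hw hw0 => ?_⟩))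
    have := key ((p - t) ^ 2 + (x + y) ^ 2) (by omega) (by omega) (by omega) le_rfl w hw hw0
    simp only
    linarith

lemma Spans.lower {a m p x t y : ℤ} (h : Spans a m p x t y) (c : ℤ) :
    Spans a m p x (t + c * p) (y - c * x) := by
  obtain ⟨h1, h2, h3⟩ := h
  refine ⟨h1, ?_, fun w hw => ?_⟩
  · rw [show a * (t + c * p) + (y - c * x) = (a * t + y) + c * (a * p - x) by ring]
    exact dvd_add h2 (h1.mul_left c)
  · obtain ⟨i, j, rfl⟩ := h3 w hw
    exact ⟨i - j * c, j, by ext <;> simp only <;> ring⟩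

lemma Spans.upper {a m p x t y : ℤ} (h : Spans a m p x t y) (c : ℤ) :
    Spans a m (p + c * t) (x - c * y) t y := by
  obtain ⟨h1, h2, h3⟩ := h
  refine ⟨?_, h2, fun w hw => ?_⟩
  · rw [show a * (p + c * t) - (x - c * y) = (a * p - x) + c * (a * t + y) by ring]
    exact dvd_add h1 (h2.mul_left c)
  · obtain ⟨i, j, rfl⟩ := h3 w hw
    exact ⟨i, j - i * c, by ext <;> simp only <;> ring⟩

/-- `[0; q_{k+1}, …, q_{k+d}]`, the tail of the continued fraction. -/
def cfTail (q : ℕ → ℤ) (d k : ℕ) : ℚ :=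
  cfVal (List.ofFn fun i : Fin d => q (k + i.1 + 1))

lemma cfTail_succ (q : ℕ → ℤ) (d k : ℕ) :
    cfTail q (d + 1) k = ((q (k + 1) : ℚ) + cfTail q d (k + 1))⁻¹ := by
  simp only [cfTail, List.ofFn_succ, cfVal]
  congr 3
  congr 1
  funext i
  congr 1
  simp only [Fin.val_succ]
  omega

lemma cfTail_mem (q : ℕ → ℤ) (d : ℕ) : ∀ k, (∀ i, k < i → i ≤ k + d → 0 < q i) →
    0 ≤ cfTail q d k ∧ cfTail q d k ≤ 1 := by
  induction d with
  | zero => intro k _; simp [cfTail, cfVal]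
  | succ d ih =>
    intro k hk
    have h := ih (k + 1) fun i hi hi' => hk i (by omega) (by omega)
    have hq : (1 : ℚ) ≤ q (k + 1) := by exact_mod_cast hk (k + 1) (by omega) (by omega)
    rw [cfTail_succ]
    exact ⟨inv_nonneg.2 (by linarith), inv_le_one_of_one_le₀ (by linarith)⟩

/-- there is an index `0 ≤ k ≤ n − 1` such that one of the four vectors
`v₁⁽ᵏ⁾, v₂⁽ᵏ⁾, v₁⁽ᵏ⁾ + v₂⁽ᵏ⁾, v₁⁽ᵏ⁾ − v₂⁽ᵏ⁾` (where `v₁⁽ᵏ⁾, v₂⁽ᵏ⁾` are the rows of the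
s-state `X̂ₖ`) is a shortest vector of `Λ(a, m)`. -/
theorem qin_state_shortest (a m : ℤ) (ha : 1 < a) (ham : a < m) (hgcd : Int.gcd a m = 1)
    (n : ℕ) (q : ℕ → ℤ) (hq : ∀ k, 1 ≤ k → k ≤ n → 0 < q k)
    (hcf : (a : ℚ) / (m : ℚ) = cfVal (List.ofFn fun i : Fin n => q (i.1 + 1)))
    (X : ℕ → Matrix (Fin 2) (Fin 2) ℤ)
    (hX0 : X 0 = !![1, -a; 0, m])
    (hXodd : ∀ k, Odd k → X k = !![1, 0; q k, 1] * X (k - 1))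
    (hXeven : ∀ k, 0 < k → Even k → X k = !![1, q k; 0, 1] * X (k - 1)) :
    ∃ k ≤ n - 1,
      IsShortestVec a m (X k 0 0, X k 0 1) ∨
      IsShortestVec a m (X k 1 0, X k 1 1) ∨
      IsShortestVec a m (X k 0 0 + X k 1 0, X k 0 1 + X k 1 1) ∨
      IsShortestVec a m (X k 0 0 - X k 1 0, X k 0 1 - X k 1 1) := by
  have hn : 1 ≤ n := by
    rcases Nat.eq_zero_or_pos n with rfl | h
    · have h1 : (0 : ℚ) < a / m := by
        have : (0 : ℚ) < a := by exact_mod_cast (by omega : 0 < a)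
        have : (0 : ℚ) < m := by exact_mod_cast (by omega : 0 < m)
        positivity
      rw [hcf] at h1
      simp [cfVal] at h1
    · exact h
  -- Either some state up to `k` already works, or the Euclidean remainder `r` still exceeds `Q`.
  have main : ∀ k d, k + d + 1 = n →
      (∃ s R Q r : ℤ, 0 ≤ s ∧ s ≤ Q ∧ 1 ≤ Q ∧ Q < r ∧ r ≤ R ∧ IsCoprime R r ∧
        (r : ℚ) = R * cfTail q (d + 1) k ∧
        ((Odd k ∧ X k = !![s, -R; Q, r] ∧ Spans a m s R Q r) ∨
          (Even k ∧ X k = !![Q, -r; s, R] ∧ Spans a m Q r s R))) ∨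
      ∃ k ≤ n - 1,
        IsShortestVec a m (X k 0 0, X k 0 1) ∨
        IsShortestVec a m (X k 1 0, X k 1 1) ∨
        IsShortestVec a m (X k 0 0 + X k 1 0, X k 0 1 + X k 1 1) ∨
        IsShortestVec a m (X k 0 0 - X k 1 0, X k 0 1 - X k 1 1) := by
    intro k
    induction k with
    | zero =>
      intro d hd
      left
      refine ⟨0, m, 1, a, le_rfl, zero_le_one, le_rfl, ha, ham.le, ?_, ?_, Or.inr ⟨by simp, hX0, ?_⟩⟩
      · exact (Int.isCoprime_iff_gcd_eq_one.2 hgcd).symm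
      · have hm : (m : ℚ) ≠ 0 := by exact_mod_cast (by omega : m ≠ 0)
        have h1 : cfTail q (d + 1) 0 = a / m := by
          rw [hcf, cfTail]
          obtain rfl : n = d + 1 := by omega
          simp
        rw [h1]; field_simp
      · refine ⟨by simp, by simp, fun w hw => ?_⟩
        obtain ⟨c, hc⟩ := hw
        exact ⟨w.1, c, by ext <;> simp only <;> linarith⟩
    | succ k ih =>
      intro d hd
      rcases ih (d + 1) (by omega) with ⟨s, R, Q, r, hs, hsQ, hQ, hQr, hrR, hco, hcfk, hX⟩ | h
      swap
      · exact Or.inr h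
      have hq1 : 1 ≤ q (k + 1) := hq (k + 1) (by omega) (by omega)
      have hc := cfTail_mem q (d + 1) (k + 1) fun i hi hi' => hq i (by omega) (by omega)
      have hr0 : (0 : ℚ) < r := by exact_mod_cast (by omega : 0 < r)
      -- One step of the Euclidean algorithm strips one partial quotient off the tail.
      have hstep : ((R - q (k + 1) * r : ℤ) : ℚ) = r * cfTail q (d + 1) (k + 1) := by
        have hpos : (0 : ℚ) < q (k + 1) + cfTail q (d + 1) (k + 1) := by
          have : (1 : ℚ) ≤ q (k + 1) := by exact_mod_cast hq1
          linarith
        rw [cfTail_succ, ← div_eq_mul_inv, eq_div_iff hpos.ne'] at hcfk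
        push_cast
        linarith
      have hr'0 : 0 ≤ R - q (k + 1) * r := by
        have : (0 : ℚ) ≤ ((R - q (k + 1) * r : ℤ) : ℚ) := by
          rw [hstep]; exact mul_nonneg hr0.le hc.1
        exact_mod_cast this
      have hr'r : R - q (k + 1) * r ≤ r := by
        have : ((R - q (k + 1) * r : ℤ) : ℚ) ≤ r := by
          rw [hstep]; exact mul_le_of_le_one_right hr0.le hc.2
        exact_mod_cast this
      have hQQ : Q ≤ s + q (k + 1) * Q := by nlinarith
      have hco' : IsCoprime r (R - q (k + 1) * r) := by
        rw [show R - q (k + 1) * r = R + r * -q (k + 1) by ring]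
        exact hco.symm.add_mul_left_right _
      have hX' : (Odd (k + 1) ∧ X (k + 1) = !![Q, -r; s + q (k + 1) * Q, R - q (k + 1) * r] ∧
            Spans a m Q r (s + q (k + 1) * Q) (R - q (k + 1) * r)) ∨
          (Even (k + 1) ∧ X (k + 1) = !![s + q (k + 1) * Q, -(R - q (k + 1) * r); Q, r] ∧
            Spans a m (s + q (k + 1) * Q) (R - q (k + 1) * r) Q r) := by
        rcases hX with ⟨hk, hXk, hS⟩ | ⟨hk, hXk, hS⟩
        · refine Or.inr ⟨hk.add_one, ?_, hS.upper _⟩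
          rw [hXeven (k + 1) (by omega) hk.add_one, Nat.add_sub_cancel, hXk]
          ext i j
          fin_cases i <;> fin_cases j <;> simp [Matrix.mul_apply, Fin.sum_univ_two]
          ring
        · refine Or.inl ⟨hk.add_one, ?_, hS.lower _⟩
          rw [hXodd (k + 1) hk.add_one, Nat.add_sub_cancel, hXk]
          ext i j
          fin_cases i <;> fin_cases j <;> simp [Matrix.mul_apply, Fin.sum_univ_two] <;> ring
      generalize hQ' : s + q (k + 1) * Q = Q' at *
      generalize hr' : R - q (k + 1) * r = r' at *
      by_cases hlt : Q' < r'
      · exact Or.inl ⟨Q, r, Q', r', by omega, hQQ, by omega, hlt, hr'r, hco', hstep, hX'⟩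
      · refine Or.inr ⟨k + 1, by omega, ?_⟩
        have hdet : 0 < Q * r' + r * Q' := by
          have : 0 ≤ Q * r' := mul_nonneg (by omega) hr'0
          have : 0 < r * Q' := mul_pos (by omega) (by omega)
          omega
        rcases hX' with ⟨_, hXk, hS⟩ | ⟨_, hXk, hS⟩
        · have := shortest_of_spans hS (by omega) (by omega) (by omega) hr'0 hdet
            (Or.inl ⟨by omega, by omega, hQQ, hr'r⟩)
          rw [hXk]; exact this
        · have := shortest_of_spans hS (by omega) hr'0 (by omega) (by omega) (by linarith)
            (Or.inr ⟨by omega, by omega, hQQ, hr'r⟩)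
          rw [hXk]; exact this
  rcases main (n - 1) 0 (by omega) with ⟨s, R, Q, r, _, _, hQ, hQr, _, hco, hcfk, _⟩ | h
  · -- The last remainder `r` divides `R`, hence is `1` by coprimality, contradicting `1 ≤ Q < r`.
    exfalso
    have hqn : (0 : ℚ) < q (n - 1 + 1) := by
      exact_mod_cast hq (n - 1 + 1) (by omega) (by omega)
    have h0 : cfTail q 0 (n - 1 + 1) = 0 := by simp [cfTail, cfVal]
    rw [cfTail_succ, h0, add_zero, ← div_eq_mul_inv, eq_div_iff hqn.ne'] at hcfk
    have hR : r * q (n - 1 + 1) = R := by exact_mod_cast hcfk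
    have hu : IsUnit r := hco.isUnit_of_dvd' ⟨_, hR.symm⟩ dvd_rfl
    rcases Int.isUnit_iff.1 hu with h | h <;> omega
  · exact h
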